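/- Let f: F_2^m → F_2 be a Boolean function of m variables and let n ≥ m. Then the Boolean function f*: F_2^n → F_2 defined by the CA-based construction f*(x_1,…,x_n) = ⊕_{i=1}^{n−m+1} f(x_i, x_{i+1}, …, x_{i+m−1}) has the same algebraic degree as f. -/

import Mathlib

/-- The CA-based construction: given a local rule `f` of `m` variables and `n ≥ m`,
the `n`-variable function `f*` is the XOR of all output cells of the no-boundary CA. -/
def caStar (m n : ℕ) (h : m ≤ n) (f : (Fin m → ZMod 2) → ZMod 2) :
    (Fin n → ZMod 2) → ZMod 2 :=
  fun x => ∑ i : Fin (n - m + 1),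
    f (fun j => x ⟨i.val + j.val, by have hi := i.isLt; have hj := j.isLt; omega⟩)

/-- The ANF coefficient `a_I` of a Boolean function, via the Möbius transform:
`a_I = ⊕_{x : supp(x) ⊆ I} f(x)`. -/
def anf {n : ℕ} (f : (Fin n → ZMod 2) → ZMod 2) (I : Finset (Fin n)) : ZMod 2 :=
  ∑ x ∈ Finset.univ.filter (fun x : Fin n → ZMod 2 => ∀ i, x i = 1 → i ∈ I), f x

/-- The algebraic degree of a Boolean function: `max {|I| : a_I ≠ 0}` (0 for the zero function). -/
def algDegree {n : ℕ} (f : (Fin n → ZMod 2) → ZMod 2) : ℕ :=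
  (Finset.univ.filter fun I : Finset (Fin n) => anf f I ≠ 0).sup Finset.card

/-- The Walsh transform `W_f(a) = Σ_x (-1)^(f(x) ⊕ a·x)`. -/
def walsh {n : ℕ} (f : (Fin n → ZMod 2) → ZMod 2) (a : Fin n → ZMod 2) : ℤ :=
  ∑ x : Fin n → ZMod 2, (-1 : ℤ) ^ (f x + ∑ i, a i * x i).val

/-- The semi-bent value `λ`: `2^((n+1)/2)` for odd `n`, `2^((n+2)/2)` for even `n`. -/
def sbLambda (n : ℕ) : ℤ := if Odd n then 2 ^ ((n + 1) / 2) else 2 ^ ((n + 2) / 2)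

/-- A Boolean function is semi-bent if its Walsh transform takes only the values `0, λ, -λ`. -/
def semiBent {n : ℕ} (f : (Fin n → ZMod 2) → ZMod 2) : Prop :=
  ∀ a, walsh f a = 0 ∨ walsh f a = sbLambda n ∨ walsh f a = -sbLambda n

/-- A Boolean function is balanced if it takes the value 1 exactly `2^(n-1)` times. -/
def balanced {n : ℕ} (f : (Fin n → ZMod 2) → ZMod 2) : Prop :=
  (Finset.univ.filter fun x => f x = 1).card = 2 ^ (n - 1)

/-- `b` is a linear structure of `g` if the derivative `D_b g(x) = g(x) ⊕ g(x ⊕ b)` is constant. -/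
def isLinearStructure {n : ℕ} (g : (Fin n → ZMod 2) → ZMod 2)
    (b : Fin n → ZMod 2) : Prop :=
  (∀ x, g x + g (x + b) = 0) ∨ (∀ x, g x + g (x + b) = 1)

/-- Coefficients off the window vanish. -/
theorem anf_comp_zero {m n : ℕ} (e : Fin m ↪ Fin n) (f : (Fin m → ZMod 2) → ZMod 2)
    (I : Finset (Fin n)) (a : Fin n) (ha : a ∈ I) (hr : ∀ j, e j ≠ a) :
    anf (fun x => f (fun j => x (e j))) I = 0 := by
  unfold anf
  refine Finset.sum_involution (fun x _ => Function.update x a (x a + 1)) ?_ ?_ ?_ ?_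
  · intro x _
    have : (fun j => Function.update x a (x a + 1) (e j)) = fun j => x (e j) := by
      funext j
      rw [Function.update_of_ne (hr j)]
    simp only [this]
    exact CharTwo.add_self_eq_zero _
  · intro x _ _ hx
    have := congrFun hx a
    simp at this
  · intro x hx
    simp only [Finset.mem_filter, Finset.mem_univ, true_and] at hx ⊢
    intro i hi
    by_cases hia : i = a
    · exact hia ▸ ha
    · rw [Function.update_of_ne hia] at hi
      exact hx i hi
  · intro x _
    have h2 : (1 : ZMod 2) + 1 = 0 := by decide
    simp [add_assoc, h2]

/-- Coefficients on the window are those of `f`. -/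
theorem anf_comp_map {m n : ℕ} (e : Fin m ↪ Fin n) (f : (Fin m → ZMod 2) → ZMod 2)
    (J : Finset (Fin m)) :
    anf (fun x => f (fun j => x (e j))) (J.map e) = anf f J := by
  unfold anf
  refine Finset.sum_nbij' (fun x j => x (e j)) (fun y => Function.extend e y 0) ?_ ?_ ?_ ?_ ?_
  · intro x hx
    simp only [Finset.mem_filter, Finset.mem_univ, true_and] at hx ⊢
    intro i hi
    simpa using hx _ hi
  · intro y hy
    simp only [Finset.mem_filter, Finset.mem_univ, true_and] at hy ⊢
    intro i hi
    by_cases hie : ∃ j, e j = i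
    · obtain ⟨j, rfl⟩ := hie
      rw [e.injective.extend_apply] at hi
      simpa using hy j hi
    · rw [Function.extend_apply' _ _ _ hie] at hi
      simp at hi
  · intro x hx
    simp only [Finset.mem_filter, Finset.mem_univ, true_and] at hx
    funext i
    by_cases hie : ∃ j, e j = i
    · obtain ⟨j, rfl⟩ := hie
      rw [e.injective.extend_apply]
    · rw [Function.extend_apply' _ _ _ hie]
      have h01 : ∀ z : ZMod 2, z ≠ 1 → 0 = z := by decide
      refine h01 _ fun h1 => hie ?_
      obtain ⟨j, _, hj⟩ := Finset.mem_map.1 (hx i h1)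
      exact ⟨j, hj⟩
  · intro y _
    funext j
    exact e.injective.extend_apply _ _ _
  · intro x _
    rfl

theorem anf_comp_ne {m n : ℕ} (e : Fin m ↪ Fin n) (f : (Fin m → ZMod 2) → ZMod 2)
    (I : Finset (Fin n)) (hI : anf (fun x => f (fun j => x (e j))) I ≠ 0) :
    ∃ J : Finset (Fin m), I = J.map e ∧ anf f J ≠ 0 := by
  classical
  have hsub : ∀ a ∈ I, ∃ j, e j = a := by
    intro a ha
    by_contra hc
    push Not at hc
    exact hI (anf_comp_zero e f I a ha hc)
  have hJ : I = (Finset.univ.filter fun j => e j ∈ I).map e := by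
    ext a
    simp only [Finset.mem_map, Finset.mem_filter, Finset.mem_univ, true_and]
    constructor
    · intro ha
      obtain ⟨j, rfl⟩ := hsub a ha
      exact ⟨j, ha, rfl⟩
    · rintro ⟨j, hj, rfl⟩
      exact hj
  refine ⟨_, hJ, ?_⟩
  rw [hJ, anf_comp_map] at hI
  exact hI

/-- The window embedding. -/
def winEmb (m n : ℕ) (h : m ≤ n) (i : Fin (n - m + 1)) : Fin m ↪ Fin n where
  toFun j := ⟨i.val + j.val, by have hi := i.isLt; have hj := j.isLt; omega⟩
  inj' a b hab := by
    have := congrArg Fin.val hab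
    simp only at this
    exact Fin.ext (by omega)

theorem anf_caStar (m n : ℕ) (h : m ≤ n) (f : (Fin m → ZMod 2) → ZMod 2)
    (I : Finset (Fin n)) :
    anf (caStar m n h f) I =
      ∑ i : Fin (n - m + 1), anf (fun x => f (fun j => x (winEmb m n h i j))) I := by
  unfold anf caStar
  rw [Finset.sum_comm]
  rfl

theorem sum_map_winEmb (m n : ℕ) (h : m ≤ n) (i : Fin (n - m + 1)) (J : Finset (Fin m)) :
    ∑ a ∈ J.map (winEmb m n h i), a.val = J.card * i.val + ∑ j ∈ J, j.val := by
  rw [Finset.sum_map]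
  change ∑ x ∈ J, (i.val + x.val) = _
  simp [Finset.sum_add_distrib]

/-- the CA-based construction preserves the algebraic degree. -/
theorem caStar_algDegree_eq (m n : ℕ) (h : m ≤ n) (f : (Fin m → ZMod 2) → ZMod 2) :
    algDegree (caStar m n h f) = algDegree f := by
  apply le_antisymm
  · refine Finset.sup_le fun I hI => ?_
    simp only [Finset.mem_filter, Finset.mem_univ, true_and] at hI
    rw [anf_caStar] at hI
    obtain ⟨i, _, hi⟩ := Finset.exists_ne_zero_of_sum_ne_zero hI
    obtain ⟨J, rfl, hJ⟩ := anf_comp_ne _ f I hi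
    rw [Finset.card_map]
    exact Finset.le_sup (f := Finset.card) (by simpa using hJ)
  · rcases Nat.eq_zero_or_pos (algDegree f) with h0 | hpos
    · rw [h0]
      exact Nat.zero_le _
    · have hne : (Finset.univ.filter fun I : Finset (Fin m) => anf f I ≠ 0).Nonempty := by
        by_contra hc
        rw [Finset.not_nonempty_iff_eq_empty] at hc
        rw [algDegree, hc] at hpos
        simp at hpos
      obtain ⟨J0, hJ0, hJ0c⟩ := Finset.exists_mem_eq_sup _ hne Finset.card
      change algDegree f = _ at hJ0c
      obtain ⟨J, hJ, hmin⟩ := Finset.exists_min_image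
        (Finset.univ.filter fun I : Finset (Fin m) => anf f I ≠ 0 ∧ I.card = algDegree f)
        (fun I => ∑ j ∈ I, j.val)
        ⟨J0, by simpa [hJ0c] using hJ0⟩
      simp only [Finset.mem_filter, Finset.mem_univ, true_and] at hJ hmin
      have key : anf (caStar m n h f) (J.map (winEmb m n h 0)) = anf f J := by
        rw [anf_caStar, Finset.sum_eq_single 0, anf_comp_map]
        · intro i _ hi
          by_contra hc
          obtain ⟨J', hJJ, hJ'⟩ := anf_comp_ne _ f _ hc
          have hcard : J'.card = J.card := by
            have := congrArg Finset.card hJJ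
            simpa using this.symm
          have hs := congrArg (fun I => ∑ a ∈ I, a.val) hJJ
          simp only [sum_map_winEmb] at hs
          have hm := hmin J' ⟨hJ', hcard.trans hJ.2⟩
          have hip : 0 < i.val := Nat.pos_of_ne_zero fun hz => hi (Fin.ext hz)
          have := Nat.mul_pos (hcard ▸ hJ.2 ▸ hpos : 0 < J'.card) hip
          simp only [Fin.val_zero, mul_zero, zero_add] at hs
          omega
        · simp
      rw [← hJ.2, ← Finset.card_map (winEmb m n h 0)]
      refine Finset.le_sup (f := Finset.card) ?_
      simp only [Finset.mem_filter, Finset.mem_univ, true_and]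
      rw [key]
      exact hJ.1
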